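/- arXiv:1012.3833 — 2 statements merged into one kernel-verified Lean document; each statement's English description precedes it below -/
import Mathlib

section
/- Let p be an odd prime and x a rational p-integer. Then \sum_{k=0}^{(p-1)/2} \binom{2k}{k}^2 / 16^k \cdot (x^k - (-1)^{(p-1)/2} (1-x)^k) \equiv 0 \pmod{p^2}. -/
open Finset

/-- `a ≡ b (mod p^k)` as rationals: `a - b` is `p^k` times a `p`-integral rational. -/
def ratCongr (p k : ℕ) (a b : ℚ) : Prop :=
  ∃ c : ℚ, a - b = (p : ℚ) ^ k * c ∧ ¬ (p ∣ c.den)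

/-!
Write `p = 2n + 1`. Multiplied by `(2ᵏ k!)²`, the number `binom(2k, k)² / 16ᵏ` becomes
`∏_{j < k} (2j + 1)²`, and the `k`-th coefficient of the shifted Legendre polynomial of degree `n`
becomes `∏_{j < k} ((2j + 1)² - p²)`. As `2ᵏ k!` is prime to `p` for `k ≤ n`, the sum
`∑ binom(2k, k)² xᵏ / 16ᵏ` is congruent modulo `p²` to the shifted Legendre polynomial, which
satisfies `Pₙ(x) = (-1)ⁿ Pₙ(1 - x)`.
-/

open Polynomial Nat

theorem factorial_mul_centralBinom (k : ℕ) :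
    k ! * centralBinom k = 2 ^ k * ∏ j ∈ range k, (2 * j + 1) := by
  induction k with
  | zero => simp
  | succ k ih =>
    rw [factorial_succ, prod_range_succ]
    linear_combination k ! * succ_mul_centralBinom_succ k + 2 * (2 * k + 1) * ih

theorem coeff_succ_shiftedLegendre (n k : ℕ) :
    ((k : ℤ) + 1) ^ 2 * (shiftedLegendre n).coeff (k + 1) =
      -((n - k) * (n + k + 1)) * (shiftedLegendre n).coeff k := by
  have lower : (n.choose (k + 1) : ℤ) * (k + 1) = n.choose k * (n - k) := by
    rcases le_or_gt k n with hk | hk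
    · rw [← Nat.cast_sub hk]
      exact_mod_cast choose_succ_right_eq n k
    · simp [choose_eq_zero_of_lt hk, choose_eq_zero_of_lt (hk.trans k.lt_succ_self)]
  have upper : ((n : ℤ) + k + 1) * (n + k).choose k = (n + (k + 1)).choose (k + 1) * (k + 1) :=
    mod_cast add_one_mul_choose_eq (n + k) k
  rw [coeff_shiftedLegendre, coeff_shiftedLegendre, choose_symm_add, choose_symm_add]
  linear_combination (-(-1) ^ k * (k + 1) * ((n + (k + 1)).choose (k + 1) : ℤ)) * lower
    + (-1) ^ k * n.choose k * ((n : ℤ) - k) * upper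

theorem sq_two_pow_mul_factorial_mul_coeff_shiftedLegendre (n k : ℕ) :
    (2 ^ k * (k ! : ℤ)) ^ 2 * (shiftedLegendre n).coeff k =
      ∏ j ∈ range k, ((2 * (j : ℤ) + 1) ^ 2 - (2 * n + 1) ^ 2) := by
  induction k with
  | zero => simp [coeff_shiftedLegendre]
  | succ k ih =>
    rw [prod_range_succ, ← ih, factorial_succ]
    push_cast
    linear_combination 4 * (2 ^ k * (k ! : ℤ)) ^ 2 * coeff_succ_shiftedLegendre n k

theorem sq_centralBinom_modEq {n k : ℕ} (h : (2 * n + 1).Coprime k !) :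
    (centralBinom k : ℤ) ^ 2 ≡ 16 ^ k * (shiftedLegendre n).coeff k [ZMOD (2 * n + 1) ^ 2] := by
  have central : (k ! : ℤ) * centralBinom k = 2 ^ k * ∏ j ∈ range k, (2 * (j : ℤ) + 1) :=
    mod_cast factorial_mul_centralBinom k
  have scaled : (2 ^ k * (k ! : ℤ)) ^ 2 * (16 ^ k * (shiftedLegendre n).coeff k) ≡
      (2 ^ k * (k ! : ℤ)) ^ 2 * (centralBinom k : ℤ) ^ 2 [ZMOD (2 * n + 1) ^ 2] :=
    calc (2 ^ k * (k ! : ℤ)) ^ 2 * (16 ^ k * (shiftedLegendre n).coeff k)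
      _ = 16 ^ k * ∏ j ∈ range k, ((2 * (j : ℤ) + 1) ^ 2 - (2 * n + 1) ^ 2) := by
        rw [← sq_two_pow_mul_factorial_mul_coeff_shiftedLegendre]
        ring
      _ ≡ 16 ^ k * ∏ j ∈ range k, (2 * (j : ℤ) + 1) ^ 2 [ZMOD (2 * n + 1) ^ 2] :=
        (Int.ModEq.prod fun j _ ↦ Int.modEq_iff_dvd.2 (by simp)).mul_left _
      _ = (2 ^ k * (2 ^ k * ∏ j ∈ range k, (2 * (j : ℤ) + 1))) ^ 2 := by
        rw [prod_pow, show (16 : ℤ) = 2 ^ 4 by norm_num, pow_right_comm]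
        ring
      _ = (2 ^ k * (k ! : ℤ)) ^ 2 * (centralBinom k : ℤ) ^ 2 := by
        rw [← central]
        ring
  have coprime : IsCoprime ((2 * n + 1 : ℤ) ^ 2) ((2 ^ k * (k ! : ℤ)) ^ 2) := by
    have : (2 * n + 1).Coprime (2 ^ k * k !) := (Nat.Coprime.pow_right k (by simp)).mul_right h
    exact_mod_cast (Nat.isCoprime_iff_coprime.2 this).pow
  have hdvd := scaled.dvd
  rw [← mul_sub] at hdvd
  exact (Int.modEq_iff_dvd.2 (coprime.dvd_of_dvd_mul_left hdvd)).symm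

theorem sum_coeff_shiftedLegendre_mul_eq_zero {R : Type*} [CommRing R] (n : ℕ) (x : R) :
    ∑ k ∈ range (n + 1),
      ((shiftedLegendre n).coeff k : R) * (x ^ k - (-1) ^ n * (1 - x) ^ k) = 0 := by
  have symm := shiftedLegendre_eval_symm n x
  simp only [aeval_eq_sum_range, natDegree_shiftedLegendre, zsmul_eq_mul] at symm
  simp only [mul_sub, sum_sub_distrib, mul_left_comm _ ((-1 : R) ^ n), ← mul_sum, ← symm, sub_self]

theorem stmt4_general {R : Type*} [CommRing R] {p : ℕ} (hp : p.Prime) (hodd : p ≠ 2)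
    {u : R} (hu : 16 * u = 1) (x : R) :
    (p : R) ^ 2 ∣ ∑ k ∈ range ((p - 1) / 2 + 1),
      ((2 * k).choose k : R) ^ 2 * u ^ k *
        (x ^ k - (-1) ^ ((p - 1) / 2) * (1 - x) ^ k) := by
  obtain ⟨n, rfl⟩ := hp.odd_of_ne_two hodd
  rw [show (2 * n + 1 - 1) / 2 = n by omega, ← sub_zero (∑ k ∈ _, _),
    ← sum_coeff_shiftedLegendre_mul_eq_zero n x, ← sum_sub_distrib]
  refine dvd_sum fun k hk ↦ ?_
  have hcop : (2 * n + 1).Coprime k ! :=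
    hp.coprime_factorial_of_lt (by linarith [mem_range.1 hk])
  have hdvd : ((2 * n + 1 : ℕ) : R) ^ 2 ∣
      (centralBinom k : R) ^ 2 - 16 ^ k * ((shiftedLegendre n).coeff k : R) := by
    simpa using map_dvd (Int.castRingHom R) (sq_centralBinom_modEq hcop).symm.dvd
  have huk : (16 : R) ^ k * u ^ k = 1 := by rw [← mul_pow, hu, one_pow]
  have hterm : (centralBinom k : R) ^ 2 * u ^ k - (shiftedLegendre n).coeff k =
      ((centralBinom k : R) ^ 2 - 16 ^ k * (shiftedLegendre n).coeff k) * u ^ k := by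
    linear_combination ((shiftedLegendre n).coeff k : R) * huk
  rw [← centralBinom_eq_two_mul_choose, ← sub_mul, hterm]
  exact (hdvd.mul_right _).mul_right _

theorem ratCongr_zero_of_dvd {p : ℕ} [Fact p.Prime] {k : ℕ} {a : (Rat.padicValuation p).integer}
    (h : (p : (Rat.padicValuation p).integer) ^ k ∣ a) : ratCongr p k a 0 := by
  obtain ⟨c, rfl⟩ := h
  exact ⟨c, by simp, Rat.padicValuation_le_one_iff.1 c.2⟩

theorem inv_natCast_mem_integer_padicValuation {p m : ℕ} [Fact p.Prime] (h : ¬ p ∣ m) :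
    (m : ℚ)⁻¹ ∈ (Rat.padicValuation p).integer := by
  have hm : 0 < m := Nat.pos_of_ne_zero fun h0 ↦ h (h0 ▸ dvd_zero p)
  exact Rat.padicValuation_le_one_iff.2 (by rwa [Rat.inv_natCast_den_of_pos hm])

theorem stmt4 (p : ℕ) (hp : p.Prime) (hodd : p ≠ 2) (x : ℚ) (hx : ¬ (p ∣ x.den)) :
    ratCongr p 2
      (∑ k ∈ Finset.range ((p - 1) / 2 + 1),
        ((2 * k).choose k : ℚ) ^ 2 / 16 ^ k *
          (x ^ k - (-1 : ℚ) ^ ((p - 1) / 2) * (1 - x) ^ k)) 0 := by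
  have := Fact.mk hp
  have h16 : ¬ p ∣ 16 := fun h ↦
    hodd ((prime_dvd_prime_iff_eq hp prime_two).1 (hp.dvd_of_dvd_pow (n := 4) h))
  simpa [div_eq_mul_inv] using ratCongr_zero_of_dvd <| stmt4_general hp hodd
    (u := ⟨16⁻¹, inv_natCast_mem_integer_padicValuation h16⟩)
    (Subtype.ext (mul_inv_cancel₀ (by norm_num))) ⟨x, Rat.padicValuation_le_one_iff.2 hx⟩
end

section
/- Let p be an odd prime. If p \equiv 3 (mod 4), then \sum_{k=0}^{(p-1)/2} \binom{2k}{k}^2 / 32^k \equiv 0 \pmod{p^2}. If p \equiv 1 (mod 4) and p = a^2 + b^2 with integers a, b and a \equiv 1 (mod 4), then \sum_{k=0}^{(p-1)/2} \binom{2k}{k}^2 / 32^k \equiv 2a - p/(2a) \pmod{p^2}. -/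
open Finset

/-!
Put `n = (p - 1) / 2`. Modulo `p ^ 2` the numbers `C(2k, k)²` are, up to powers of `16`, the
coefficients of the shifted Legendre polynomial of degree `n`, so the sum is the value of that
polynomial at `1 / 2`: it vanishes when `n` is odd, and is `±C(2m, m) / 2 ^ (2m)` when `n = 2m`.
In the latter case it is also, up to sign, the Jacobi sum of `ω ^ (3m)` and `ω ^ (6m)`, where `ω` is
the Teichmüller character modulo `p ^ 2`. These characters are images of a quartic character with
values in `ℤ[i]` and of its square under a ring homomorphism `ℤ[i] → ℤ / p ^ 2`, so the sum is the
image `s` of a Gaussian integer `z` of norm `p`; a congruence modulo `2 (i - 1)` for Jacobi sums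
normalizes its real part, which is therefore `a`. If `s'` is the image of the conjugate of `z`, then
`s + s' = 2 a` and `s * s' = p` with `s` a unit, so `s' ^ 2 = 0` and `2 a s = (2 a) ^ 2 - p`.
-/

section Legendre

open Polynomial

variable {R : Type*} [CommRing R]

theorem aeval_shiftedLegendre_eq_coeff (n : ℕ) (x : R) :
    aeval x (shiftedLegendre n) = (((1 + X) * (1 - C x * (1 + X))) ^ n : R[X]).coeff n := by
  have expansion : (((1 + X) * (1 - C x * (1 + X))) ^ n : R[X]) =
      ∑ k ∈ range (n + 1), C ((-1) ^ k * n.choose k * x ^ k) * (1 + X) ^ (n + k) := by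
    rw [mul_pow, sub_eq_neg_add, add_pow (-(C x * (1 + X))), mul_sum]
    refine sum_congr rfl fun k _ ↦ ?_
    simp only [one_pow, neg_pow (C x * (1 + X)), mul_pow, C_mul, C_pow, C_neg, C_1, pow_add,
      map_natCast]
    ring
  rw [expansion, finsetSum_coeff, shiftedLegendre, map_sum]
  refine sum_congr rfl fun k _ ↦ ?_
  rw [coeff_C_mul, coeff_one_add_X_pow]
  simp only [map_mul, map_pow, map_neg, map_one, map_natCast, aeval_X]
  ring

theorem aeval_half_shiftedLegendre {x : R} (hx : 2 * x = 1) (n : ℕ) :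
    aeval x (shiftedLegendre n) = x ^ n * (expand R 2 ((1 - X) ^ n)).coeff n := by
  have factor : ((1 + X) * (1 - C x * (1 + X)) : R[X]) = C x * expand R 2 (1 - X) := by
    have hC : 2 * C x = 1 := by rw [← C_ofNat, ← C_mul, hx, C_1]
    simp only [map_sub, map_one, expand_X]
    linear_combination -(1 + X) * hC
  rw [aeval_shiftedLegendre_eq_coeff, factor, mul_pow, ← C_pow, coeff_C_mul, map_pow]

theorem aeval_half_shiftedLegendre_of_odd {x : R} (hx : 2 * x = 1) {n : ℕ} (hn : Odd n) :
    aeval x (shiftedLegendre n) = 0 := by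
  rw [aeval_half_shiftedLegendre hx, coeff_expand two_pos, if_neg hn.not_two_dvd_nat, mul_zero]

theorem aeval_half_shiftedLegendre_two_mul {x : R} (hx : 2 * x = 1) (m : ℕ) :
    aeval x (shiftedLegendre (2 * m)) = x ^ (2 * m) * (-1) ^ m * m.centralBinom := by
  have reflect : (1 - X : R[X]) ^ (m * 2) = (X + C (-1)) ^ (m * 2) := by
    rw [← neg_sub, (even_two.mul_left m).neg_pow, C_neg, C_1, sub_eq_add_neg]
  rw [aeval_half_shiftedLegendre hx, mul_comm 2 m, coeff_expand_mul two_pos, reflect,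
    coeff_X_add_C_pow, mul_two, Nat.add_sub_cancel, ← two_mul, Nat.centralBinom, mul_assoc]

end Legendre

section Residue

/-- The reduction map from the integers modulo `p ^ 2` to the integers modulo `p`. -/
def residue (p : ℕ) : ZMod (p ^ 2) →+* ZMod p :=
  ZMod.castHom (dvd_pow_self p two_ne_zero) (ZMod p)

theorem natCast_sq_eq_zero (p : ℕ) : (p : ZMod (p ^ 2)) ^ 2 = 0 := by
  rw [← Nat.cast_pow, ZMod.natCast_self]

variable {p : ℕ}

theorem residue_surjective : Function.Surjective (residue p) :=
  ZMod.ringHom_surjective _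

theorem natCast_dvd_sub_of_residue_eq {x y : ZMod (p ^ 2)} (h : residue p x = residue p y) :
    (p : ZMod (p ^ 2)) ∣ x - y := by
  obtain ⟨a, ha⟩ := ZMod.intCast_surjective (x - y)
  have hpa : (p : ℤ) ∣ a := by
    rw [← ZMod.intCast_zmod_eq_zero_iff_dvd, ← map_intCast (residue p), ha, map_sub, h, sub_self]
  rw [← ha]
  exact_mod_cast Int.cast_dvd_cast _ _ hpa

theorem natCast_mul_eq_of_residue_eq {x y : ZMod (p ^ 2)} (h : residue p x = residue p y) :
    (p : ZMod (p ^ 2)) * x = p * y := by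
  obtain ⟨w, hw⟩ := natCast_dvd_sub_of_residue_eq h
  linear_combination (p : ZMod (p ^ 2)) * hw + w * natCast_sq_eq_zero p

variable [Fact p.Prime]

theorem isUnit_of_residue_ne_zero {x : ZMod (p ^ 2)} (hx : residue p x ≠ 0) : IsUnit x := by
  obtain ⟨y, hy⟩ := residue_surjective (residue p x)⁻¹
  have hxy : residue p (x * y) = residue p 1 := by rw [map_mul, hy, mul_inv_cancel₀ hx, map_one]
  obtain ⟨w, hw⟩ := natCast_dvd_sub_of_residue_eq hxy
  refine .of_mul_eq_one (y * (2 - x * y)) ?_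
  linear_combination (-(x * y - 1) - p * w) * hw - w ^ 2 * natCast_sq_eq_zero p

theorem isUnit_natCast_of_pos_of_lt {k : ℕ} (h0 : 0 < k) (hk : k < p) :
    IsUnit (k : ZMod (p ^ 2)) := by
  apply isUnit_of_residue_ne_zero
  rw [map_natCast, Ne, ZMod.natCast_eq_zero_iff]
  exact Nat.not_dvd_of_pos_of_lt h0 hk

theorem natCast_mul_inv_of_pos_of_lt {k : ℕ} (h0 : 0 < k) (hk : k < p) :
    (k : ZMod (p ^ 2)) * (k : ZMod (p ^ 2))⁻¹ = 1 :=
  ZMod.mul_inv_of_unit _ (isUnit_natCast_of_pos_of_lt h0 hk)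

theorem isUnit_natCast_choose_of_lt {n k : ℕ} (hk : k ≤ n) (hn : n < p) :
    IsUnit (n.choose k : ZMod (p ^ 2)) := by
  apply isUnit_of_residue_ne_zero
  rw [map_natCast, Ne, ZMod.natCast_eq_zero_iff]
  intro h
  exact hn.not_ge <| (Fact.out : p.Prime).dvd_factorial.mp <|
    h.trans ⟨_, by rw [← Nat.choose_mul_factorial_mul_factorial hk, mul_assoc]⟩

end Residue

section BinomialModSq

theorem four_mul_sq_mul_choose_mul_choose_succ (R : Type*) [CommRing R] (n k : ℕ) :
    4 * (k + 1 : R) ^ 2 * (n.choose (k + 1) * (n + (k + 1)).choose n) =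
      ((2 * n + 1) ^ 2 - (2 * k + 1) ^ 2) * (n.choose k * (n + k).choose n) := by
  have left : (n.choose (k + 1) : R) * (k + 1) = n.choose k * (n - k) := by
    rcases le_or_gt k n with hk | hk
    · rw [← Nat.cast_sub hk]
      exact_mod_cast congrArg (Nat.cast (R := R)) (Nat.choose_succ_right_eq n k)
    · simp [Nat.choose_eq_zero_of_lt hk, Nat.choose_eq_zero_of_lt (hk.trans k.lt_succ_self)]
  have right : ((n + (k + 1)).choose n : R) * (k + 1) = (n + k).choose n * (n + k + 1) := by
    rw [Nat.choose_symm_add, Nat.choose_symm_add (b := k)]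
    exact_mod_cast congrArg (Nat.cast (R := R))
      ((Nat.add_one_mul_choose_eq (n + k) k).symm.trans (mul_comm _ _))
  linear_combination 4 * ((n + (k + 1)).choose n : R) * (k + 1) * left +
    4 * (n.choose k : R) * (n - k) * right

variable {p : ℕ} [Fact p.Prime]

theorem choose_mul_choose_mul_pow_eq_centralBinom_sq {n : ℕ} (hp : p = 2 * n + 1) {k : ℕ}
    (hk : k ≤ n) :
    (n.choose k * (n + k).choose n : ZMod (p ^ 2)) * (-16) ^ k =
      (k.centralBinom : ZMod (p ^ 2)) ^ 2 := by
  induction k with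
  | zero => simp
  | succ k ih =>
    have hunit : IsUnit ((k + 1 : ZMod (p ^ 2)) ^ 2) := by
      exact_mod_cast (isUnit_natCast_of_pos_of_lt k.succ_pos (by lia : k + 1 < p)).pow 2
    have hp_sq : (2 * n + 1 : ZMod (p ^ 2)) ^ 2 = 0 := by
      have hcast : (p : ZMod (p ^ 2)) = 2 * n + 1 := mod_cast congrArg Nat.cast hp
      rw [← hcast, natCast_sq_eq_zero]
    have step := four_mul_sq_mul_choose_mul_choose_succ (ZMod (p ^ 2)) n k
    have central : (k + 1 : ZMod (p ^ 2)) * (k + 1).centralBinom =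
        2 * (2 * k + 1) * k.centralBinom :=
      mod_cast congrArg (Nat.cast (R := ZMod (p ^ 2))) (Nat.succ_mul_centralBinom_succ k)
    rw [hp_sq] at step
    refine hunit.mul_left_cancel ?_
    rw [← mul_pow (k + 1 : ZMod (p ^ 2)), central]
    linear_combination -4 * (-16) ^ k * step + 4 * (2 * k + 1) ^ 2 * ih (k.le_succ.trans hk)

theorem sum_centralBinom_sq_mul_pow_eq_aeval {n : ℕ} (hp : p = 2 * n + 1) (y : ZMod (p ^ 2)) :
    ∑ k ∈ range (n + 1), (k.centralBinom : ZMod (p ^ 2)) ^ 2 * y ^ k =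
      Polynomial.aeval (16 * y) (Polynomial.shiftedLegendre n) := by
  rw [Polynomial.shiftedLegendre, map_sum]
  refine sum_congr rfl fun k hk ↦ ?_
  rw [← choose_mul_choose_mul_pow_eq_centralBinom_sq hp (mem_range_succ_iff.mp hk)]
  simp only [map_mul, map_pow, map_neg, map_one, map_natCast, Polynomial.aeval_X]
  rw [neg_pow 16, mul_pow]
  ring

theorem choose_prime_succ_eq {k : ℕ} (hk : k + 1 < p) :
    (p.choose (k + 1) : ZMod (p ^ 2)) = p * ((-1) ^ k * ((k + 1 : ℕ) : ZMod (p ^ 2))⁻¹) := by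
  induction k with
  | zero => simp
  | succ k ih =>
    have hk' : k + 1 < p := by lia
    have hinv := natCast_mul_inv_of_pos_of_lt k.succ_pos hk'
    have hinv' := natCast_mul_inv_of_pos_of_lt (k + 1).succ_pos hk
    have step : (p.choose (k + 1 + 1) : ZMod (p ^ 2)) * ((k + 1 + 1 : ℕ) : ZMod (p ^ 2)) =
        p.choose (k + 1) * (p - (k + 1 : ℕ)) := by
      rw [← Nat.cast_sub hk'.le]
      exact_mod_cast congrArg (Nat.cast (R := ZMod (p ^ 2))) (Nat.choose_succ_right_eq p (k + 1))
    rw [ih hk'] at step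
    generalize ((k + 1 : ℕ) : ZMod (p ^ 2))⁻¹ = u at *
    generalize ((k + 1 + 1 : ℕ) : ZMod (p ^ 2))⁻¹ = v at *
    linear_combination -(p.choose (k + 1 + 1) : ZMod (p ^ 2)) * hinv' + v * step +
      v * (-1) ^ k * u * natCast_sq_eq_zero p - p * (-1) ^ k * v * hinv

theorem sum_range_neg_one_pow_mul_eq_of_eq_two_mul {R : Type*} [CommRing R] {f : ℕ → R} {s : ℕ}
    (hf : ∀ k, 0 < k → k ≤ s → f k = 2 * f (2 * k)) :
    ∑ k ∈ range (2 * s), (-1) ^ k * f (k + 1) = ∑ i ∈ range s, f (s + 1 + i) := by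
  induction s with
  | zero => simp
  | succ s ih =>
    have shift : ∑ i ∈ range s, f (s + 1 + (i + 1)) =
        ∑ i ∈ range s, f (s + 1 + i) + f (2 * s + 1) - f (s + 1) := by
      have := (sum_range_succ' (fun i ↦ f (s + 1 + i)) s).symm.trans (sum_range_succ _ s)
      rw [eq_sub_iff_add_eq, two_mul, add_right_comm s]
      exact this
    have ih := ih fun k h0 hk ↦ hf k h0 (hk.trans s.le_succ)
    rw [mul_add_one 2 s, sum_range_succ, sum_range_succ, ih, sum_range_succ]
    simp only [add_right_comm _ 1, ← add_assoc] at shift ⊢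
    rw [shift, pow_succ, (even_two_mul s).neg_one_pow, hf (s + 1) s.succ_pos le_rfl]
    ring_nf

theorem two_pow_sub_one_eq_mul_sum_inv {m : ℕ} (hp : p = 4 * m + 1) :
    (2 : ZMod (p ^ 2)) ^ (4 * m) - 1 =
      p * ∑ i ∈ range m, ((m + 1 + i : ℕ) : ZMod (p ^ 2))⁻¹ := by
  have hinv_two_mul : ∀ k, 0 < k → k ≤ m →
      (k : ZMod (p ^ 2))⁻¹ = 2 * ((2 * k : ℕ) : ZMod (p ^ 2))⁻¹ := by
    intro k h0 hk
    have hinv := natCast_mul_inv_of_pos_of_lt h0 (by lia : k < p)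
    have hinv' := natCast_mul_inv_of_pos_of_lt (by lia : 0 < 2 * k) (by lia : 2 * k < p)
    push_cast at hinv' ⊢
    linear_combination 2 * (2 * (k : ZMod (p ^ 2)))⁻¹ * hinv - (k : ZMod (p ^ 2))⁻¹ * hinv'
  have halfway : ∑ k ∈ range (2 * m + 1), (p.choose k : ZMod (p ^ 2)) = 2 ^ (4 * m) := by
    have h := Nat.sum_range_choose_halfway (2 * m)
    rw [← mul_assoc, show 2 * 2 * m + 1 = p by lia, show 4 ^ (2 * m) = 2 ^ (4 * m) by
      rw [pow_mul, pow_mul]; norm_num] at h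
    exact_mod_cast congrArg (Nat.cast (R := ZMod (p ^ 2))) h
  rw [← sum_range_neg_one_pow_mul_eq_of_eq_two_mul
      (f := fun k ↦ (k : ZMod (p ^ 2))⁻¹) hinv_two_mul,
    ← halfway, sum_range_succ', Nat.choose_zero_right, Nat.cast_one, add_sub_cancel_right, mul_sum]
  exact sum_congr rfl fun k hk ↦ choose_prime_succ_eq (by have := mem_range.mp hk; lia)

theorem choose_prime_add_add_eq (b : ℕ) {k : ℕ} (hbk : b + k < p) :
    ((p + b + k).choose k : ZMod (p ^ 2)) =
      (b + k).choose k * (1 + p * ∑ i ∈ range k, ((b + 1 + i : ℕ) : ZMod (p ^ 2))⁻¹) := by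
  induction k with
  | zero => simp
  | succ k ih =>
    have hunit := isUnit_natCast_of_pos_of_lt k.succ_pos (by lia : k + 1 < p)
    have hinv := natCast_mul_inv_of_pos_of_lt (by lia : 0 < b + 1 + k) (by lia : b + 1 + k < p)
    have step (n : ℕ) : ((n + (k + 1)).choose (k + 1) : ZMod (p ^ 2)) * (k + 1 : ℕ) =
        (n + k + 1) * (n + k).choose k :=
      mod_cast congrArg (Nat.cast (R := ZMod (p ^ 2))) (Nat.add_one_mul_choose_eq (n + k) k).symm
    have step_b := step b
    have step_pb := step (p + b)
    refine hunit.mul_right_cancel ?_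
    rw [step_pb, sum_range_succ, ih (by lia), mul_right_comm, step_b]
    push_cast at hinv ⊢
    linear_combination (-(p : ZMod (p ^ 2)) * (b + k).choose k) * hinv +
      (b + k).choose k * (∑ i ∈ range k, (b + 1 + i : ZMod (p ^ 2))⁻¹) * natCast_sq_eq_zero p

theorem two_mul_choose_six_mul {m : ℕ} (hp : p = 4 * m + 1) :
    2 * ((6 * m).choose m : ZMod (p ^ 2)) = m.centralBinom * (2 ^ (4 * m) - 2 * p) := by
  have shifted : ((6 * m + 1).choose m : ZMod (p ^ 2)) = m.centralBinom * 2 ^ (4 * m) := by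
    have h := choose_prime_add_add_eq m (by lia : m + m < p)
    rw [← two_pow_sub_one_eq_mul_sum_inv hp, show p + m + m = 6 * m + 1 by lia, ← two_mul,
      add_sub_cancel] at h
    exact h
  have step : ((6 * m).choose m : ZMod (p ^ 2)) * (6 * m + 1) =
      (6 * m + 1).choose m * (5 * m + 1) := by
    have h := Nat.choose_mul_succ_eq (6 * m) m
    rw [show 6 * m + 1 - m = 5 * m + 1 by lia] at h
    exact_mod_cast congrArg (Nat.cast (R := ZMod (p ^ 2))) h
  have hcast : (p : ZMod (p ^ 2)) = 4 * m + 1 := mod_cast congrArg Nat.cast hp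
  have mul_two_pow : (p : ZMod (p ^ 2)) * (2 ^ (4 * m) - 1) = 0 := by
    rw [two_pow_sub_one_eq_mul_sum_inv hp, ← mul_assoc, ← sq, natCast_sq_eq_zero, zero_mul]
  have mul_four : (2 * (6 * m).choose m : ZMod (p ^ 2)) * (1 - 3 * p) =
      m.centralBinom * 2 ^ (4 * m) * (1 - 5 * p) := by
    rw [← shifted]
    linear_combination -4 * step +
      (5 * (6 * m + 1).choose m - 6 * (6 * m).choose m : ZMod (p ^ 2)) * hcast
  linear_combination (1 + 3 * p : ZMod (p ^ 2)) * mul_four +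
    (18 * (6 * m).choose m - 15 * m.centralBinom * 2 ^ (4 * m) : ZMod (p ^ 2)) *
      natCast_sq_eq_zero p - 2 * m.centralBinom * mul_two_pow

theorem two_pow_two_mul_eq_neg_one_pow {m : ℕ} (hp : p = 4 * m + 1) :
    (2 : ZMod p) ^ (2 * m) = (-1) ^ m := by
  have euler := legendreSym.eq_pow p 2
  rw [legendreSym.at_two (by lia), ZMod.χ₈_nat_eq_if_mod_eight, if_neg (by lia),
    show p / 2 = 2 * m by lia] at euler
  rcases m.even_or_odd with hm | hm
  · rw [if_pos (by obtain ⟨c, hc⟩ := hm; lia)] at euler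
    rw [hm.neg_one_pow]
    exact_mod_cast euler.symm
  · rw [if_neg (by obtain ⟨c, hc⟩ := hm; lia)] at euler
    rw [hm.neg_one_pow]
    exact_mod_cast euler.symm

theorem residue_neg_one_pow_mul_two_pow {m : ℕ} (hp : p = 4 * m + 1) :
    residue p ((-1) ^ m * 2 ^ (2 * m)) = residue p 1 := by
  simp only [map_mul, map_pow, map_neg, map_one, map_ofNat, two_pow_two_mul_eq_neg_one_pow hp]
  rw [← mul_pow, neg_one_mul, neg_neg, one_pow]

theorem two_pow_mul_three_sub_two_pow {m : ℕ} (hp : p = 4 * m + 1) :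
    (-1) ^ m * (2 : ZMod (p ^ 2)) ^ (2 * m) * (3 - 2 ^ (4 * m)) = 2 := by
  obtain ⟨v, hv⟩ := natCast_dvd_sub_of_residue_eq (residue_neg_one_pow_mul_two_pow hp)
  have hsq : ((-1) ^ m * 2 ^ (2 * m) : ZMod (p ^ 2)) ^ 2 = 2 ^ (4 * m) := by
    rw [mul_pow, ← pow_mul, ← pow_mul, mul_comm m, (even_two_mul m).neg_one_pow]
    ring_nf
  rw [← hsq, sub_eq_iff_eq_add.mp hv]
  linear_combination (-3 * v ^ 2 - p * v ^ 3) * natCast_sq_eq_zero p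

end BinomialModSq

section Teichmuller

variable {p : ℕ}

theorem pow_prime_eq_of_residue_eq {x y : ZMod (p ^ 2)} (h : residue p x = residue p y) :
    x ^ p = y ^ p := by
  have hdvd := dvd_sub_pow_of_dvd_sub (natCast_dvd_sub_of_residue_eq h) 1
  rwa [pow_one, one_add_one_eq_two, natCast_sq_eq_zero, zero_dvd_iff, sub_eq_zero] at hdvd

variable [Fact p.Prime]

variable (p) in
/-- The Teichmüller character modulo `p ^ 2`: the multiplicative section of the reduction map
`residue p`. It sends `x` to the `p`-th power of any lift of `x`. -/
def teichmuller : MulChar (ZMod p) (ZMod (p ^ 2)) where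
  toFun x := (x.val : ZMod (p ^ 2)) ^ p
  map_one' := by rw [ZMod.val_one, Nat.cast_one, one_pow]
  map_mul' x y := by
    rw [← mul_pow]
    exact pow_prime_eq_of_residue_eq (by simp)
  map_nonunit' x hx := by
    rw [isUnit_iff_ne_zero, not_not] at hx
    rw [hx, ZMod.val_zero, Nat.cast_zero, zero_pow (Fact.out : p.Prime).ne_zero]

theorem residue_teichmuller (x : ZMod p) : residue p (teichmuller p x) = x := by
  change residue p ((x.val : ZMod (p ^ 2)) ^ p) = x
  rw [map_pow, map_natCast, ZMod.natCast_rightInverse, ZMod.pow_card]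

theorem teichmuller_residue (x : ZMod (p ^ 2)) : teichmuller p (residue p x) = x ^ p :=
  pow_prime_eq_of_residue_eq (by rw [map_natCast, ZMod.natCast_rightInverse])

theorem teichmuller_neg_one (hp : Odd p) : teichmuller p (-1) = -1 := by
  simpa only [map_neg, map_one, hp.neg_one_pow] using teichmuller_residue (-1 : ZMod (p ^ 2))

theorem teichmuller_pow_card_sub_one {x : ZMod p} (hx : x ≠ 0) :
    teichmuller p x ^ (p - 1) = 1 := by
  rw [← map_pow, ZMod.pow_card_sub_one_eq_one hx, map_one]

theorem sum_teichmuller_pow {k : ℕ} (hk : k ≠ 0) :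
    ∑ x, teichmuller p x ^ k = if p - 1 ∣ k then (p - 1 : ZMod (p ^ 2)) else 0 := by
  split_ifs with hdvd
  · obtain ⟨c, rfl⟩ := hdvd
    have hsum : ∀ x ∈ univ.erase (0 : ZMod p), teichmuller p x ^ ((p - 1) * c) = 1 := by
      intro x hx
      rw [pow_mul, teichmuller_pow_card_sub_one (ne_of_mem_erase hx), one_pow]
    rw [← add_sum_erase univ _ (mem_univ 0), sum_congr rfl hsum, MulChar.map_zero, zero_pow hk,
      zero_add, sum_const, card_erase_of_mem (mem_univ 0), card_univ, ZMod.card, nsmul_one,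
      Nat.cast_sub (Fact.out : p.Prime).one_le, Nat.cast_one]
  · obtain ⟨b, hb⟩ : ∃ b : (ZMod p)ˣ, b ^ k ≠ 1 := by
      by_contra! hall
      exact hdvd (by simpa [ZMod.card] using (FiniteField.forall_pow_eq_one_iff (ZMod p) k).mp hall)
    have hunit : IsUnit (teichmuller p b ^ k - 1) := by
      apply isUnit_of_residue_ne_zero
      rw [map_sub, map_pow, residue_teichmuller, map_one, sub_ne_zero]
      exact fun h ↦ hb (Units.ext (by rw [Units.val_pow_eq_pow_val, h, Units.val_one]))
    have invariant : ∑ x, teichmuller p (b * x) ^ k = ∑ x, teichmuller p x ^ k :=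
      Equiv.sum_comp (Units.mulLeft b) fun x ↦ teichmuller p x ^ k
    simp only [map_mul, mul_pow] at invariant
    rw [← mul_sum] at invariant
    exact hunit.mul_right_eq_zero.mp (by rw [sub_mul, one_mul, invariant, sub_self])

theorem sum_teichmuller_pow_mul_one_sub_pow {k : ℕ} (hk : k ≠ 0) (r : ℕ) :
    ∑ x, teichmuller p x ^ k * (1 - teichmuller p x) ^ r =
      (p - 1) * ∑ j ∈ range (r + 1) with p - 1 ∣ k + j, (-1) ^ j * (r.choose j : ZMod (p ^ 2)) := by
  have expand_term (x : ZMod p) : teichmuller p x ^ k * (1 - teichmuller p x) ^ r =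
      ∑ j ∈ range (r + 1), (-1) ^ j * (r.choose j : ZMod (p ^ 2)) * teichmuller p x ^ (k + j) := by
    rw [sub_eq_neg_add, add_pow, mul_sum]
    refine sum_congr rfl fun j _ ↦ ?_
    rw [neg_pow, one_pow]
    ring
  simp only [expand_term]
  rw [sum_comm, sum_filter, mul_sum]
  refine sum_congr rfl fun j _ ↦ ?_
  rw [← mul_sum, sum_teichmuller_pow (by lia)]
  split_ifs <;> ring

-- `(3 * t - t ^ 3) / 2` has value `e` and derivative `0` at `t = e` when `e ^ 2 = 1`, so it removes
-- the `p`-part of `z ^ (2 * m)`.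
theorem two_mul_teichmuller_pow_six_mul {m : ℕ} (hp : p = 4 * m + 1) {x : ZMod p}
    {z : ZMod (p ^ 2)} (hz : residue p z = x) :
    2 * teichmuller p x ^ (6 * m) = 3 * z ^ (2 * m) - z ^ (6 * m) := by
  have hm : 2 ≤ 2 * m := by have := (Fact.out : p.Prime).one_lt; lia
  rw [show 6 * m = 2 * m * 3 by lia, pow_mul _ (2 * m), pow_mul z (2 * m)]
  rcases eq_or_ne x 0 with rfl | hx
  · obtain ⟨w, hw⟩ := natCast_dvd_sub_of_residue_eq (hz.trans (map_zero _).symm)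
    have hz_pow : z ^ (2 * m) = 0 := by
      rw [← sub_zero z, hw, mul_pow, pow_eq_zero_of_le hm (natCast_sq_eq_zero p), zero_mul]
    rw [hz_pow, MulChar.map_zero, zero_pow (by lia)]
    ring
  · have hsq : (teichmuller p x ^ (2 * m)) ^ 2 = 1 := by
      rw [← pow_mul, show 2 * m * 2 = p - 1 by lia, teichmuller_pow_card_sub_one hx]
    have hlift : residue p (z ^ (2 * m)) = residue p (teichmuller p x ^ (2 * m)) := by
      rw [map_pow, map_pow, hz, residue_teichmuller]
    obtain ⟨w, hw⟩ := natCast_dvd_sub_of_residue_eq hlift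
    rw [sub_eq_iff_eq_add'.mp hw]
    generalize teichmuller p x ^ (2 * m) = e at hsq ⊢
    linear_combination (3 * e + 3 * p * w) * hsq +
      (3 * e * w ^ 2 + p * w ^ 3) * natCast_sq_eq_zero p

theorem filter_dvd_range_two_mul {m : ℕ} (hm : m ≠ 0) :
    {j ∈ range (2 * m + 1) | 4 * m ∣ 3 * m + j} = {m} := by
  ext j
  simp only [mem_filter, mem_range, mem_singleton]
  constructor
  · rintro ⟨hj, c, hc⟩
    obtain rfl : c = 1 := by nlinarith [Nat.pos_of_ne_zero hm]
    lia
  · rintro rfl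
    exact ⟨by lia, 1, by lia⟩

theorem filter_dvd_range_six_mul {m : ℕ} (hm : m ≠ 0) :
    {j ∈ range (6 * m + 1) | 4 * m ∣ 3 * m + j} = {m, 5 * m} := by
  ext j
  simp only [mem_filter, mem_range, mem_insert, mem_singleton]
  constructor
  · rintro ⟨hj, c, hc⟩
    have hc_pos : 0 < c := by nlinarith [Nat.pos_of_ne_zero hm]
    have hc_lt : c < 3 := by nlinarith [Nat.pos_of_ne_zero hm]
    interval_cases c <;> lia
  · rintro (rfl | rfl)
    · exact ⟨by lia, 1, by lia⟩
    · exact ⟨by lia, 2, by lia⟩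

theorem two_pow_mul_jacobiSum_teichmuller {m : ℕ} (hp : p = 4 * m + 1) :
    2 ^ (2 * m) * jacobiSum (teichmuller p ^ (3 * m)) (teichmuller p ^ (6 * m)) =
      -(m.centralBinom : ZMod (p ^ 2)) := by
  have hm : m ≠ 0 := by rintro rfl; exact (Fact.out : p.Prime).ne_one hp
  have expansion : 2 * jacobiSum (teichmuller p ^ (3 * m)) (teichmuller p ^ (6 * m)) =
      3 * ∑ x, teichmuller p x ^ (3 * m) * (1 - teichmuller p x) ^ (2 * m) -
        ∑ x, teichmuller p x ^ (3 * m) * (1 - teichmuller p x) ^ (6 * m) := by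
    rw [jacobiSum, mul_sum, mul_sum, ← sum_sub_distrib]
    refine sum_congr rfl fun x _ ↦ ?_
    have hlift : residue p (1 - teichmuller p x) = 1 - x := by
      rw [map_sub, map_one, residue_teichmuller]
    rw [MulChar.pow_apply' _ (by lia), MulChar.pow_apply' _ (by lia)]
    linear_combination teichmuller p x ^ (3 * m) * two_mul_teichmuller_pow_six_mul hp hlift
  have hp_sub : p - 1 = 4 * m := by lia
  have neg_one_pow_five : (-1 : ZMod (p ^ 2)) ^ (5 * m) = (-1) ^ m := by
    rw [mul_comm, pow_mul', Odd.neg_one_pow (by decide)]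
  rw [sum_teichmuller_pow_mul_one_sub_pow (by lia), sum_teichmuller_pow_mul_one_sub_pow (by lia),
    hp_sub, filter_dvd_range_two_mul hm, filter_dvd_range_six_mul hm, sum_singleton,
    sum_pair (by lia), neg_one_pow_five, ← Nat.choose_symm_of_eq_add (by lia : 6 * m = m + 5 * m),
    ← Nat.centralBinom] at expansion
  have hunit : IsUnit (2 : ZMod (p ^ 2)) := by
    exact_mod_cast isUnit_natCast_of_pos_of_lt two_pos (by lia : 2 < p)
  have euler := natCast_mul_eq_of_residue_eq (residue_neg_one_pow_mul_two_pow hp)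
  refine hunit.mul_left_cancel ?_
  linear_combination 2 ^ (2 * m) * expansion
    - (p - 1) * (-1) ^ m * 2 ^ (2 * m) * two_mul_choose_six_mul hp
    + (p - 1) * m.centralBinom * two_pow_mul_three_sub_two_pow hp
    + 2 * (p - 1) * m.centralBinom * euler + 2 * m.centralBinom * natCast_sq_eq_zero p

end Teichmuller

section GaussianJacobi

theorem jacobiSum_add_card_eq_sum {F R : Type*} [Field F] [Fintype F] [CommRing R] [IsDomain R]
    {χ φ : MulChar F R} (hχ : χ ≠ 1) (hφ : φ ≠ 1) :
    jacobiSum χ φ + Fintype.card F = ∑ x, (χ x - 1) * (φ (1 - x) - 1) := by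
  have hφ_sum : ∑ x, φ (1 - x) = 0 :=
    (Equiv.sum_comp (Equiv.subLeft 1) φ).trans (MulChar.sum_eq_zero_of_ne_one hφ)
  simp only [sub_mul, mul_sub, one_mul, mul_one, sum_sub_distrib, hφ_sum,
    MulChar.sum_eq_zero_of_ne_one hχ, sum_const, card_univ, nsmul_one]
  rw [jacobiSum]
  ring

variable {F : Type*} [Field F]

theorem star_mulChar_apply [Finite F] (χ : MulChar F GaussianInt) (x : F) :
    star (χ x) = χ⁻¹ x := by
  apply GaussianInt.toComplex_injective
  have h := MulChar.star_apply' (χ.ringHomComp GaussianInt.toComplex) x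
  rwa [MulChar.ringHomComp_inv, MulChar.ringHomComp_apply, MulChar.ringHomComp_apply,
    ← starRingEnd_apply, ← GaussianInt.toComplex_star] at h

variable [Fintype F]

theorem star_jacobiSum (χ φ : MulChar F GaussianInt) :
    star (jacobiSum χ φ) = jacobiSum χ⁻¹ φ⁻¹ := by
  simp only [jacobiSum, star_sum, star_mul', star_mulChar_apply]

theorem jacobiSum_mul_star {χ φ : MulChar F GaussianInt} (hχ : χ ≠ 1) (hφ : φ ≠ 1)
    (hχφ : χ * φ ≠ 1) : jacobiSum χ φ * star (jacobiSum χ φ) = Fintype.card F := by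
  have hinj := GaussianInt.toComplex_injective
  have hchar : ringChar ℂ ≠ ringChar F := by
    rw [ringChar.eq_zero]
    exact (CharP.ringChar_ne_zero_of_finite F).symm
  apply hinj
  rw [star_jacobiSum, map_mul, ← jacobiSum_ringHomComp, ← jacobiSum_ringHomComp,
    ← MulChar.ringHomComp_inv, ← MulChar.ringHomComp_inv, map_natCast]
  refine jacobiSum_mul_jacobiSum_inv hchar ((MulChar.ringHomComp_ne_one_iff hinj).mpr hχ)
    ((MulChar.ringHomComp_ne_one_iff hinj).mpr hφ) ?_
  rwa [← MulChar.ringHomComp_mul, MulChar.ringHomComp_ne_one_iff hinj]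

theorem isPrimitiveRoot_sqrtd_neg_one : IsPrimitiveRoot (Zsqrtd.sqrtd : GaussianInt) 4 :=
  IsPrimitiveRoot.mk_of_lt _ (by decide) (by decide) fun l h0 h4 ↦ by interval_cases l <;> decide

theorem jacobiSum_mul_star_of_orderOf_eq_four {ψ : MulChar F GaussianInt} (hψ : orderOf ψ = 4) :
    jacobiSum ψ (ψ ^ 2) * star (jacobiSum ψ (ψ ^ 2)) = Fintype.card F := by
  refine jacobiSum_mul_star ?_ (pow_ne_one_of_lt_orderOf two_ne_zero (by lia)) ?_
  · rw [← pow_one ψ]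
    exact pow_ne_one_of_lt_orderOf one_ne_zero (by lia)
  · rw [← pow_succ']
    exact pow_ne_one_of_lt_orderOf three_ne_zero (by lia)

theorem two_mul_sqrtd_sub_one_dvd_jacobiSum_add_card {ψ : MulChar F GaussianInt}
    (hψ : orderOf ψ = 4) :
    (2 * (Zsqrtd.sqrtd - 1) : GaussianInt) ∣
      jacobiSum ψ (ψ ^ 2) + (Fintype.card F : GaussianInt) := by
  have hψ_ne : ψ ≠ 1 := by rintro rfl; simp at hψ
  have hψ_sq_ne : ψ ^ 2 ≠ 1 := pow_ne_one_of_lt_orderOf two_ne_zero (by lia)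
  have hψ_pow : ψ ^ 4 = 1 := hψ ▸ pow_orderOf_eq_one ψ
  rw [jacobiSum_add_card_eq_sum hψ_ne hψ_sq_ne]
  refine dvd_sum fun x _ ↦ ?_
  rcases eq_or_ne x 0 with rfl | hx0
  · simp
  rcases eq_or_ne x 1 with rfl | hx1
  · simp
  obtain ⟨k, -, hk⟩ := MulChar.exists_apply_eq_pow hψ_pow isPrimitiveRoot_sqrtd_neg_one hx0
  obtain ⟨l, -, hl⟩ := MulChar.exists_apply_eq_pow (χ := ψ ^ 2) (n := 2)
    (by rw [← pow_mul, hψ_pow]) (IsPrimitiveRoot.neg_one 0 (by decide)) (sub_ne_zero.mpr hx1.symm)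
  rw [mul_comm, hk, hl]
  refine mul_dvd_mul ?_ ?_
  · exact sub_one_dvd_pow_sub_one _ k
  · rcases neg_one_pow_eq_or GaussianInt l with h | h <;> rw [h]
    · simp
    · exact ⟨-1, by norm_num⟩

theorem re_sq_add_im_sq_eq_of_mul_star_eq {z : GaussianInt} {n : ℕ} (hz : z * star z = n) :
    z.re ^ 2 + z.im ^ 2 = n := by
  have hnorm : z.norm = n := mod_cast (Zsqrtd.norm_eq_mul_conj z).trans hz
  rw [Zsqrtd.norm_def] at hnorm
  linear_combination hnorm

theorem re_modEq_of_mul_star_eq_of_dvd {z : GaussianInt} {m : ℕ}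
    (hz : z * star z = (4 * m + 1 : ℕ))
    (hdvd : (2 * (Zsqrtd.sqrtd - 1) : GaussianInt) ∣ z + (4 * m + 1 : ℕ)) :
    z.re ≡ 2 * m - 1 [ZMOD 4] := by
  obtain ⟨⟨c, d⟩, hw⟩ := hdvd
  have hprod : (2 * (Zsqrtd.sqrtd - 1) * ⟨c, d⟩ : GaussianInt) = ⟨-2 * (c + d), 2 * (c - d)⟩ := by
    ext <;> simp <;> ring
  have hnorm := re_sq_add_im_sq_eq_of_mul_star_eq hz
  rw [hprod, Zsqrtd.ext_iff, Zsqrtd.re_add, Zsqrtd.im_add, Zsqrtd.re_natCast,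
    Zsqrtd.im_natCast, add_zero] at hw
  obtain ⟨hre, him⟩ := hw
  rw [← eq_sub_iff_add_eq] at hre
  push_cast at hre hnorm
  have hparity : c + d + m = 2 * -(c ^ 2 + d ^ 2 + 2 * m * (c + d) + 2 * m ^ 2) := by
    rw [hre, him] at hnorm
    linarith
  rw [hre, Int.ModEq]
  lia

theorem neg_one_pow_mul_re_jacobiSum_modEq {ψ : MulChar F GaussianInt} (hψ : orderOf ψ = 4)
    {m : ℕ} (hF : Fintype.card F = 4 * m + 1) :
    (-1) ^ (m + 1) * (jacobiSum ψ (ψ ^ 2)).re ≡ 1 [ZMOD 4] := by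
  have hnorm := hF ▸ jacobiSum_mul_star_of_orderOf_eq_four hψ
  have hre := re_modEq_of_mul_star_eq_of_dvd hnorm
    (hF ▸ two_mul_sqrtd_sub_one_dvd_jacobiSum_add_card hψ)
  rw [Int.ModEq] at hre ⊢
  rcases m.even_or_odd with hm | hm
  · rw [hm.add_one.neg_one_pow]
    obtain ⟨c, rfl⟩ := hm
    lia
  · rw [hm.add_one.neg_one_pow]
    obtain ⟨c, rfl⟩ := hm
    lia

end GaussianJacobi

section GaussianReduction

variable {p : ℕ} [Fact p.Prime]

theorem pow_six_mul_eq_neg_one_of_forall_mem_zpowers {m : ℕ} (hp : p = 4 * m + 1) {g : (ZMod p)ˣ}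
    (hg : ∀ x, x ∈ Subgroup.zpowers g) : (g : ZMod p) ^ (6 * m) = -1 := by
  have hm : m ≠ 0 := by rintro rfl; exact (Fact.out : p.Prime).ne_one hp
  have hord : orderOf g = 4 * m := by
    rw [orderOf_eq_card_of_forall_mem_zpowers hg, Nat.card_eq_fintype_card, ZMod.card_units, hp,
      Nat.add_sub_cancel]
  have hpow (k : ℕ) : (g : ZMod p) ^ k = 1 ↔ 4 * m ∣ k := by
    rw [← hord, orderOf_dvd_iff_pow_eq_one, Units.ext_iff, Units.val_pow_eq_pow_val, Units.val_one]
  have hsq : (g : ZMod p) ^ (6 * m) * g ^ (6 * m) = 1 := by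
    rw [← pow_add, hpow]
    exact ⟨3, by lia⟩
  refine (mul_self_eq_one_iff.mp hsq).resolve_left fun h ↦ ?_
  obtain ⟨c, hc⟩ := (hpow _).mp h
  have : 3 = 2 * c := Nat.eq_of_mul_eq_mul_left (Nat.pos_of_ne_zero hm) (by lia)
  lia

theorem exists_ringHomComp_eq_teichmuller_pow {m : ℕ} (hp : p = 4 * m + 1) :
    ∃ (ψ : MulChar (ZMod p) GaussianInt) (ρ : GaussianInt →+* ZMod (p ^ 2)),
      orderOf ψ = 4 ∧ ψ.ringHomComp ρ = teichmuller p ^ (3 * m) := by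
  obtain ⟨g, hg⟩ := IsCyclic.exists_generator (α := (ZMod p)ˣ)
  let i : GaussianIntˣ := isPrimitiveRoot_sqrtd_neg_one.isUnit four_ne_zero |>.unit
  have hi : i ^ 4 = 1 := Units.ext isPrimitiveRoot_sqrtd_neg_one.pow_eq_one
  have hi_mem : i ∈ rootsOfUnity (Fintype.card (ZMod p)ˣ) GaussianInt := by
    rw [mem_rootsOfUnity, ZMod.card_units, hp, Nat.add_sub_cancel, pow_mul, hi, one_pow]
  let ψ : MulChar (ZMod p) GaussianInt := MulChar.ofRootOfUnity hi_mem hg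
  have hψ_apply : ψ g = Zsqrtd.sqrtd := MulChar.ofRootOfUnity_spec hi_mem hg
  have hr : teichmuller p g ^ (3 * m) * teichmuller p g ^ (3 * m) = ((-1 : ℤ) : ZMod (p ^ 2)) := by
    rw [← pow_add, show 3 * m + 3 * m = 6 * m by lia, ← map_pow,
      pow_six_mul_eq_neg_one_of_forall_mem_zpowers hp hg, teichmuller_neg_one ⟨2 * m, by lia⟩,
      Int.cast_neg, Int.cast_one]
  refine ⟨ψ, Zsqrtd.lift ⟨_, hr⟩, ?_, ?_⟩
  · refine orderOf_eq_prime_pow (p := 2) (n := 1) (fun h ↦ ?_) ?_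
    · have h_apply := (MulChar.eq_iff hg _ _).mp h
      rw [MulChar.pow_apply_coe, hψ_apply, MulChar.one_apply_coe] at h_apply
      exact absurd h_apply (by decide)
    · rw [MulChar.eq_iff hg, MulChar.pow_apply_coe, hψ_apply, MulChar.one_apply_coe]
      decide
  · rw [MulChar.eq_iff hg, MulChar.pow_apply_coe, MulChar.ringHomComp_apply, hψ_apply]
    simp

end GaussianReduction

section TwoSquares

theorem eq_zero_of_dvd_of_sq_add_sq_eq_sq {p x y : ℤ} (hxy : x ^ 2 + y ^ 2 = p ^ 2) (hy : y ≠ 0)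
    (hdvd : p ∣ x) : x = 0 := by
  have hlt : |x| < |p| := sq_lt_sq.mp (by nlinarith [sq_pos_of_ne_zero hy])
  exact Int.eq_zero_of_abs_lt_dvd ((abs_dvd p x).mpr hdvd) hlt

theorem sq_eq_sq_of_sq_add_sq_eq {p a b c d : ℤ} (hp : Prime p) (ha : Odd a) (hc : Odd c)
    (hb : Even b) (hab : p = a ^ 2 + b ^ 2) (hcd : p = c ^ 2 + d ^ 2) : a ^ 2 = c ^ 2 := by
  have ne_zero_of_odd {t : ℤ} (ht : Odd t) : t ≠ 0 := by
    rintro rfl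
    exact Int.not_odd_zero ht
  have hac : Odd (a * c) := ha.mul hc
  have hprod : (a * d - b * c) * (a * d + b * c) = p * (a ^ 2 - c ^ 2) := by
    linear_combination c ^ 2 * hab - a ^ 2 * hcd
  have hzero : (a * d - b * c) * (a * d + b * c) = 0 := by
    rw [mul_eq_zero]
    refine (hp.dvd_or_dvd (Dvd.intro _ hprod.symm)).imp
      (eq_zero_of_dvd_of_sq_add_sq_eq_sq ?_ (ne_zero_of_odd (hac.add_even (hb.mul_right d))))
      (eq_zero_of_dvd_of_sq_add_sq_eq_sq ?_ (ne_zero_of_odd (hac.sub_even (hb.mul_right d))))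
    all_goals linear_combination -(c ^ 2 + d ^ 2) * hab - p * hcd
  rw [hzero, eq_comm, mul_eq_zero, sub_eq_zero] at hprod
  exact hprod.resolve_left hp.ne_zero

theorem eq_of_sq_add_sq_eq {p a b c d : ℤ} (hp : Prime p) (hp_odd : Odd p)
    (ha : a ≡ 1 [ZMOD 4]) (hc : c ≡ 1 [ZMOD 4])
    (hab : p = a ^ 2 + b ^ 2) (hcd : p = c ^ 2 + d ^ 2) : a = c := by
  rw [Int.ModEq] at ha hc
  have ha_odd : Odd a := Int.odd_iff.mpr (by lia)
  have hc_odd : Odd c := Int.odd_iff.mpr (by lia)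
  have hb : Even b := by
    rw [← Int.even_pow' two_ne_zero, ← sub_eq_of_eq_add' hab]
    exact hp_odd.sub_odd ha_odd.pow
  refine (sq_eq_sq_iff_eq_or_eq_neg.mp
    (sq_eq_sq_of_sq_add_sq_eq hp ha_odd hc_odd hb hab hcd)).resolve_right ?_
  rintro rfl
  lia

theorem not_dvd_of_sq_add_sq_eq {p a b : ℤ} (hp : 1 < p) (ha : a ≠ 0) (hab : p = a ^ 2 + b ^ 2) :
    ¬p ∣ a := by
  have hlt : |a| < p := abs_lt_of_sq_lt_sq (by nlinarith [sq_nonneg b]) (by lia)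
  exact fun h ↦ ha (Int.eq_zero_of_abs_lt_dvd h hlt)

end TwoSquares

section CentralBinomSum

variable {p : ℕ} [Fact p.Prime]

theorem two_pow_mul_sum_centralBinom_sq {m : ℕ} (hp : p = 4 * m + 1) {y : ZMod (p ^ 2)}
    (hy : 32 * y = 1) :
    2 ^ (2 * m) * ∑ k ∈ range (2 * m + 1), (k.centralBinom : ZMod (p ^ 2)) ^ 2 * y ^ k =
      (-1) ^ m * (m.centralBinom : ZMod (p ^ 2)) := by
  have hhalf : 2 * (16 * y) = 1 := by linear_combination hy
  rw [sum_centralBinom_sq_mul_pow_eq_aeval (by lia), aeval_half_shiftedLegendre_two_mul hhalf,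
    ← mul_assoc, ← mul_assoc, ← mul_pow, hhalf, one_pow, one_mul]

theorem exists_gaussianInt_map_eq_sum {m : ℕ} (hp : p = 4 * m + 1) {y : ZMod (p ^ 2)}
    (hy : 32 * y = 1) :
    ∃ (z : GaussianInt) (ρ : GaussianInt →+* ZMod (p ^ 2)),
      z * star z = p ∧ z.re ≡ 1 [ZMOD 4] ∧
        ρ z = ∑ k ∈ range (2 * m + 1), (k.centralBinom : ZMod (p ^ 2)) ^ 2 * y ^ k := by
  have hm : m ≠ 0 := by rintro rfl; exact (Fact.out : p.Prime).ne_one hp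
  obtain ⟨ψ, ρ, hψ, hρ⟩ := exists_ringHomComp_eq_teichmuller_pow hp
  have hcard : Fintype.card (ZMod p) = 4 * m + 1 := by rw [ZMod.card, hp]
  refine ⟨((-1) ^ (m + 1) : ℤ) * jacobiSum ψ (ψ ^ 2), ρ, ?_, ?_, ?_⟩
  · rw [star_mul', star_intCast, mul_mul_mul_comm, jacobiSum_mul_star_of_orderOf_eq_four hψ,
      ZMod.card, ← Int.cast_mul, ← mul_pow, neg_one_mul, neg_neg, one_pow, Int.cast_one, one_mul]
  · rw [Zsqrtd.re_smul]
    exact neg_one_pow_mul_re_jacobiSum_modEq hψ hcard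
  · have hunit : IsUnit ((2 : ZMod (p ^ 2)) ^ (2 * m)) := by
      exact_mod_cast (isUnit_natCast_of_pos_of_lt two_pos (by lia : 2 < p)).pow (2 * m)
    refine hunit.mul_left_cancel ?_
    have hJ : ρ (jacobiSum ψ (ψ ^ 2)) =
        jacobiSum (teichmuller p ^ (3 * m)) (teichmuller p ^ (6 * m)) := by
      rw [← jacobiSum_ringHomComp, ← MulChar.ringHomComp_pow, hρ, ← pow_mul]
      ring_nf
    have hJ' := two_pow_mul_jacobiSum_teichmuller hp
    rw [two_pow_mul_sum_centralBinom_sq hp hy, map_mul, map_intCast, hJ]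
    push_cast
    linear_combination (-1) ^ (m + 1) * hJ'

theorem sum_centralBinom_sq_mul_pow_eq_zero {n : ℕ} (hp : p = 2 * n + 1) (hn : Odd n)
    {y : ZMod (p ^ 2)} (hy : 32 * y = 1) :
    ∑ k ∈ range (n + 1), (k.centralBinom : ZMod (p ^ 2)) ^ 2 * y ^ k = 0 := by
  have hhalf : 2 * (16 * y) = 1 := by linear_combination hy
  rw [sum_centralBinom_sq_mul_pow_eq_aeval hp, aeval_half_shiftedLegendre_of_odd hhalf hn]

theorem two_mul_mul_sum_centralBinom_sq_eq {m : ℕ} (hp : p = 4 * m + 1) {a b : ℤ}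
    (hab : (p : ℤ) = a ^ 2 + b ^ 2) (ha : a ≡ 1 [ZMOD 4]) {y : ZMod (p ^ 2)} (hy : 32 * y = 1) :
    2 * (a : ZMod (p ^ 2)) *
        ∑ k ∈ range (2 * m + 1), (k.centralBinom : ZMod (p ^ 2)) ^ 2 * y ^ k =
      (2 * a) ^ 2 - p := by
  obtain ⟨z, ρ, hz, hz_re, hsum⟩ := exists_gaussianInt_map_eq_sum hp hy
  obtain rfl : a = z.re := eq_of_sq_add_sq_eq
    (Nat.prime_iff_prime_int.mp Fact.out) ⟨2 * m, by lia⟩ ha hz_re hab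
    (re_sq_add_im_sq_eq_of_mul_star_eq hz).symm
  have hunit : IsUnit (ρ z) := by
    have h := two_pow_mul_sum_centralBinom_sq hp hy
    refine isUnit_of_mul_isUnit_right (x := 2 ^ (2 * m)) ?_
    rw [hsum, h, Nat.centralBinom]
    exact (isUnit_neg_one.pow m).mul (isUnit_natCast_choose_of_lt (by lia) (by lia))
  have htrace : ρ z + ρ (star z) = 2 * z.re := by
    have h : z + star z = (2 * z.re : ℤ) := by ext <;> simp [two_mul]
    rw [← map_add, h, map_intCast, Int.cast_mul, Int.cast_ofNat]
  have hnorm : ρ z * ρ (star z) = p := by rw [← map_mul, hz, map_natCast]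
  have hstar_sq : ρ (star z) ^ 2 = 0 := by
    refine (hunit.pow 2).mul_left_cancel ?_
    rw [← mul_pow, hnorm, natCast_sq_eq_zero, mul_zero]
  rw [← hsum, ← htrace, ← hnorm]
  linear_combination -hstar_sq

end CentralBinomSum

section RatCongr

variable {p : ℕ} [Fact p.Prime]

theorem ratCongr_of_toZModPow_eq {k : ℕ} {x y : ℚ} {u v : ℤ_[p]}
    (hu : (u : ℚ_[p]) = x) (hv : (v : ℚ_[p]) = y)
    (h : PadicInt.toZModPow k u = PadicInt.toZModPow k v) : ratCongr p k x y := by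
  have hker : u - v ∈ RingHom.ker (PadicInt.toZModPow k) := by
    rw [RingHom.mem_ker, map_sub, h, sub_self]
  rw [PadicInt.ker_toZModPow, Ideal.mem_span_singleton] at hker
  obtain ⟨w, hw⟩ := hker
  have hp_ne : (p : ℚ) ^ k ≠ 0 := pow_ne_zero k (mod_cast (Fact.out : p.Prime).ne_zero)
  refine ⟨(x - y) / p ^ k, (mul_div_cancel₀ _ hp_ne).symm, fun hdvd ↦ ?_⟩
  have hw_eq : (((x - y) / p ^ k : ℚ) : ℚ_[p]) = w := by
    have hw_cast := congrArg ((↑) : ℤ_[p] → ℚ_[p]) hw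
    push_cast [hu, hv] at hw_cast ⊢
    rw [hw_cast, mul_div_cancel_left₀]
    exact_mod_cast hp_ne
  have hunit := PadicInt.isUnit_den _ (hw_eq ▸ w.2)
  exact (PadicInt.norm_natCast_lt_one_iff.mpr hdvd).ne (PadicInt.isUnit_iff.mp hunit)

theorem exists_padicInt_mul_eq_one {a : ℤ} (ha : ¬(p : ℤ) ∣ a) :
    ∃ t : ℤ_[p], a * t = 1 := by
  refine IsUnit.exists_right_inv (PadicInt.isUnit_iff.mpr ?_)
  exact (PadicInt.norm_le_one _).eq_of_not_lt fun h ↦ ha ((PadicInt.norm_int_lt_one_iff_dvd a).mp h)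

theorem ratCongr_sum_choose_sq_div {n : ℕ} (hp : p ≠ 2) {x : ℚ} {v : ℤ_[p]} (hv : (v : ℚ_[p]) = x)
    (h : ∀ y : ZMod (p ^ 2), 32 * y = 1 →
      ∑ k ∈ range (n + 1), (k.centralBinom : ZMod (p ^ 2)) ^ 2 * y ^ k = PadicInt.toZModPow 2 v) :
    ratCongr p 2 (∑ k ∈ range (n + 1), ((2 * k).choose k : ℚ) ^ 2 / 32 ^ k) x := by
  have hp_dvd : ¬(p : ℤ) ∣ 2 ^ 5 := by
    intro hdvd
    have hdvd_two := (Fact.out : p.Prime).dvd_of_dvd_pow (mod_cast hdvd : p ∣ 2 ^ 5)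
    exact hp ((Nat.prime_dvd_prime_iff_eq Fact.out Nat.prime_two).mp hdvd_two)
  obtain ⟨t, ht⟩ := exists_padicInt_mul_eq_one hp_dvd
  rw [show ((2 ^ 5 : ℤ) : ℤ_[p]) = 32 by norm_num] at ht
  refine ratCongr_of_toZModPow_eq
    (u := ∑ k ∈ range (n + 1), (k.centralBinom : ℤ_[p]) ^ 2 * t ^ k) ?_ hv ?_
  · have ht_inv : (t : ℚ_[p]) = 32⁻¹ :=
      eq_inv_of_mul_eq_one_right (mod_cast congrArg ((↑) : ℤ_[p] → ℚ_[p]) ht)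
    simp [ht_inv, Nat.centralBinom, div_eq_mul_inv]
  · have ht_map : 32 * PadicInt.toZModPow 2 t = 1 := by
      rw [← map_ofNat (PadicInt.toZModPow 2), ← map_mul, ht, map_one]
    rw [← h _ ht_map]
    simp only [map_sum, map_mul, map_pow, map_natCast]

theorem ratCongr_sum_choose_sq_div_of_eq_four_mul_add_one {m : ℕ} (hp : p = 4 * m + 1) {a b : ℤ}
    (hab : (p : ℤ) = a ^ 2 + b ^ 2) (ha : a ≡ 1 [ZMOD 4]) :
    ratCongr p 2 (∑ k ∈ range (2 * m + 1), ((2 * k).choose k : ℚ) ^ 2 / 32 ^ k)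
      (2 * a - p / (2 * a)) := by
  have hp_prime : Prime (p : ℤ) := Nat.prime_iff_prime_int.mp Fact.out
  have ha_ne : a ≠ 0 := by rintro rfl; exact absurd ha (by decide)
  have hp_two : (2 : ℤ) < p := by have := (Fact.out : p.Prime).two_le; lia
  have hdvd : ¬(p : ℤ) ∣ 2 * a := fun h ↦ (hp_prime.dvd_or_dvd h).elim
    (fun h_two ↦ (Int.le_of_dvd two_pos h_two).not_gt hp_two)
    (not_dvd_of_sq_add_sq_eq (by lia) ha_ne hab)
  obtain ⟨t, ht⟩ := exists_padicInt_mul_eq_one hdvd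
  refine ratCongr_sum_choose_sq_div (v := (2 * a : ℤ) - p * t) (by lia) ?_ fun y hy ↦ ?_
  · have ht_inv : (t : ℚ_[p]) = ((2 * a : ℤ) : ℚ_[p])⁻¹ :=
      eq_inv_of_mul_eq_one_right (mod_cast congrArg ((↑) : ℤ_[p] → ℚ_[p]) ht)
    rw [PadicInt.coe_sub, PadicInt.coe_mul, PadicInt.coe_intCast, PadicInt.coe_natCast, ht_inv]
    push_cast
    rw [div_eq_mul_inv]
  · have ht_map := congrArg (PadicInt.toZModPow 2) ht
    rw [map_mul, map_intCast, map_one] at ht_map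
    rw [map_sub, map_mul, map_intCast, map_natCast]
    push_cast at ht_map ⊢
    have hsum := two_mul_mul_sum_centralBinom_sq_eq hp hab ha hy
    generalize ∑ k ∈ range (2 * m + 1), (k.centralBinom : ZMod (p ^ 2)) ^ 2 * y ^ k = s at hsum ⊢
    linear_combination PadicInt.toZModPow 2 t * hsum - (s - 2 * a) * ht_map

end RatCongr

theorem stmt6 (p : ℕ) (hp : p.Prime) (hodd : p ≠ 2) :
    (p % 4 = 3 →
      ratCongr p 2
        (∑ k ∈ Finset.range ((p - 1) / 2 + 1), ((2 * k).choose k : ℚ) ^ 2 / 32 ^ k) 0) ∧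
    (∀ a b : ℤ, p % 4 = 1 → (p : ℤ) = a ^ 2 + b ^ 2 → a % 4 = 1 →
      ratCongr p 2
        (∑ k ∈ Finset.range ((p - 1) / 2 + 1), ((2 * k).choose k : ℚ) ^ 2 / 32 ^ k)
        (2 * (a : ℚ) - (p : ℚ) / (2 * (a : ℚ)))) := by
  have : Fact p.Prime := ⟨hp⟩
  refine ⟨fun hp_mod ↦ ?_, fun a b hp_mod hab ha ↦ ?_⟩
  · refine ratCongr_sum_choose_sq_div (v := 0) hodd (by simp) fun y hy ↦ ?_
    rw [map_zero]
    exact sum_centralBinom_sq_mul_pow_eq_zero (by lia) (Nat.odd_iff.mpr (by lia)) hy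
  · rw [show (p - 1) / 2 = 2 * (p / 4) by lia]
    exact ratCongr_sum_choose_sq_div_of_eq_four_mul_add_one (by lia) hab ha
end
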